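/- arXiv:1306.4118 — 7 statements merged into one kernel-verified Lean document; each statement's English description precedes it below -/
import Mathlib

section
/- Let A be a commutative ring, B a finitely generated A-algebra, and M a B-module. If M is finitely presented as an A-module, then M is finitely presented as a B-module. -/
open TensorProduct in
/-- Let `A` be a commutative ring, `B` a finitely generated `A`-algebra, and
`M` a `B`-module (regarded as an `A`-module via restriction of scalars). If `M` is finitely
presented as an `A`-module, then `M` is finitely presented as a `B`-module. -/
theorem finitePresentation_over_finiteType_algebra
    (A B M : Type*) [CommRing A] [CommRing B] [Algebra A B] [Algebra.FiniteType A B]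
    [AddCommGroup M] [Module A M] [Module B M] [IsScalarTower A B M]
    (h : Module.FinitePresentation A M) :
    Module.FinitePresentation B M := by
  classical
  let l : B ⊗[A] M →ₗ[B] M := LinearMap.liftBaseChange B (LinearMap.id : M →ₗ[A] M)
  have hl : ∀ b m, l (b ⊗ₜ m) = b • m := fun b m => by simp [l]
  have hsurj : Function.Surjective l := fun m => ⟨1 ⊗ₜ m, by simp [hl]⟩
  obtain ⟨s, hs⟩ := (inferInstance : Algebra.FiniteType A B).out
  obtain ⟨t, ht⟩ := (inferInstance : Module.Finite A M).fg_top
  refine Module.finitePresentation_of_surjective l hsurj ?_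
  let d : B → M → B ⊗[A] M := fun b m => b ⊗ₜ m - 1 ⊗ₜ (b • m)
  let T : Finset (B ⊗[A] M) := (s ×ˢ t).image (fun p => d p.1 p.2)
  refine ⟨T, ?_⟩
  set N := Submodule.span B (T : Set (B ⊗[A] M)) with hN
  have key : ∀ b m, d b m ∈ N := by
    intro b
    have hb : b ∈ Algebra.adjoin A (s : Set B) := hs ▸ Algebra.mem_top
    induction hb using Algebra.adjoin_induction with
    | mem x hx =>
      intro m
      have hm : m ∈ Submodule.span A (t : Set M) := ht ▸ Submodule.mem_top
      induction hm using Submodule.span_induction with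
      | mem y hy =>
        exact Submodule.subset_span (Finset.mem_coe.2 (Finset.mem_image.2
          ⟨(x, y), Finset.mem_product.2 ⟨hx, hy⟩, rfl⟩))
      | zero => simp [d]
      | add y z _ _ hy hz =>
        have : d x (y + z) = d x y + d x z := by
          simp only [d, smul_add, tmul_add]; abel
        rw [this]; exact N.add_mem hy hz
      | smul a y _ hy =>
        have : d x (a • y) = algebraMap A B a • d x y := by
          simp only [d, algebraMap_smul, smul_sub, smul_comm x a y, tmul_smul]
        rw [this]; exact N.smul_mem _ hy
    | algebraMap a =>
      intro m
      have : d (algebraMap A B a) m = 0 := by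
        simp only [d, algebraMap_smul, tmul_smul, smul_tmul', Algebra.algebraMap_eq_smul_one,
          smul_assoc, one_smul, sub_self]
      rw [this]; exact N.zero_mem
    | add x y _ _ hx hy =>
      intro m
      have : d (x + y) m = d x m + d y m := by
        simp only [d, add_smul, tmul_add, add_tmul]; abel
      rw [this]; exact N.add_mem (hx m) (hy m)
    | mul x y _ _ hx hy =>
      intro m
      have : d (x * y) m = x • d y m + d x (y • m) := by
        simp only [d, mul_smul, smul_sub, smul_tmul', smul_eq_mul, mul_one]; abel
      rw [this]; exact N.add_mem (N.smul_mem _ (hy m)) (hx _)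
  apply le_antisymm
  · rw [hN, Submodule.span_le]
    intro z hz
    obtain ⟨p, -, rfl⟩ := Finset.mem_image.1 (Finset.mem_coe.1 hz)
    simp [d, hl]
  · intro z hz
    have : ∀ z : B ⊗[A] M, z - 1 ⊗ₜ l z ∈ N := by
      intro z
      induction z using TensorProduct.induction_on with
      | zero => simp
      | tmul b m => rw [hl]; exact key b m
      | add x y hx hy =>
        rw [map_add, tmul_add, add_sub_add_comm]
        exact N.add_mem hx hy
    have h2 := this z
    rw [LinearMap.mem_ker.1 hz] at h2
    simpa using h2
end

section
/- Let A be a commutative ring, B an A-algebra generated as an A-algebra by elements b₁, …, bₙ, and M a B-module generated as an A-module by elements m₁, …, m_r. Let N be the kernel of the B-linear map M ⊗_A B → M sending m ⊗ b to b·m. Then N is generated as a B-module by the elements m_j ⊗ b_i − (b_i·m_j) ⊗ 1 for 1 ≤ i ≤ n and 1 ≤ j ≤ r. -/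
open TensorProduct

/-- Let `A` be a commutative ring, `B` an `A`-algebra generated as an
`A`-algebra by elements `b₁, …, bₙ`, and `M` a `B`-module generated as an `A`-module by
elements `m₁, …, m_r`. Let `N` be the kernel of the `B`-linear multiplication map
`M ⊗[A] B → M`, `m ⊗ b ↦ b • m` (written here, following Mathlib's conventions for base
change, as `B ⊗[A] M → M`, `b ⊗ m ↦ b • m`). Then `N` is generated as a `B`-module by the
elements `bᵢ ⊗ mⱼ - 1 ⊗ (bᵢ • mⱼ)` for `1 ≤ i ≤ n`, `1 ≤ j ≤ r`. -/
theorem ker_baseChange_smul_span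
    (A B M : Type*) [CommRing A] [CommRing B] [Algebra A B]
    [AddCommGroup M] [Module A M] [Module B M] [IsScalarTower A B M]
    {n r : ℕ} (b : Fin n → B) (m : Fin r → M)
    (hb : Algebra.adjoin A (Set.range b) = ⊤)
    (hm : Submodule.span A (Set.range m) = ⊤) :
    LinearMap.ker ((LinearMap.id : M →ₗ[A] M).liftBaseChange B) =
      Submodule.span B
        (Set.range fun p : Fin n × Fin r =>
          b p.1 ⊗ₜ[A] m p.2 - (1 : B) ⊗ₜ[A] (b p.1 • m p.2)) := by
  set S := Submodule.span B
        (Set.range fun p : Fin n × Fin r =>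
          b p.1 ⊗ₜ[A] m p.2 - (1 : B) ⊗ₜ[A] (b p.1 • m p.2)) with hS
  have h1 : ∀ (i : Fin n) (x : M), b i ⊗ₜ[A] x - (1 : B) ⊗ₜ[A] (b i • x) ∈ S := by
    intro i x
    have hx : x ∈ Submodule.span A (Set.range m) := by rw [hm]; trivial
    induction hx using Submodule.span_induction with
    | mem x hx =>
      obtain ⟨j, rfl⟩ := hx
      exact Submodule.subset_span ⟨(i, j), rfl⟩
    | zero => simp
    | add x y _ _ hx hy =>
      have := S.add_mem hx hy
      rw [smul_add, tmul_add, tmul_add]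
      convert this using 1
      abel
    | smul a x _ hx =>
      have := S.smul_mem (algebraMap A B a) hx
      rw [smul_sub, smul_tmul', smul_tmul', algebraMap_smul, algebraMap_smul,
        smul_tmul, smul_tmul, ← smul_comm (b i) a x] at this
      exact this
  have h2 : ∀ (c : B) (x : M), c ⊗ₜ[A] x - (1 : B) ⊗ₜ[A] (c • x) ∈ S := by
    intro c
    have hc : c ∈ Algebra.adjoin A (Set.range b) := by rw [hb]; trivial
    induction hc using Algebra.adjoin_induction with
    | mem c hc =>
      obtain ⟨i, rfl⟩ := hc
      exact h1 i
    | algebraMap a =>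
      intro x
      rw [algebraMap_smul, tmul_smul, smul_tmul', Algebra.algebraMap_eq_smul_one, sub_self]
      exact S.zero_mem
    | add c d _ _ hc hd =>
      intro x
      have := S.add_mem (hc x) (hd x)
      rw [add_smul, tmul_add, add_tmul]
      convert this using 1
      abel
    | mul c d _ _ hc hd =>
      intro x
      have := S.add_mem (S.smul_mem c (hd x)) (hc (d • x))
      rw [smul_sub, smul_tmul', smul_tmul', smul_eq_mul, smul_eq_mul, mul_one,
        sub_add_sub_cancel, smul_smul] at this
      exact this
  have h3 : ∀ t : B ⊗[A] M,
      t - (1 : B) ⊗ₜ[A] ((LinearMap.id : M →ₗ[A] M).liftBaseChange B t) ∈ S := by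
    intro t
    induction t using TensorProduct.induction_on with
    | zero => simp
    | tmul c x => simpa using h2 c x
    | add x y hx hy =>
      have := S.add_mem hx hy
      rw [map_add, tmul_add]
      convert this using 1
      abel
  apply le_antisymm
  · intro t ht
    have := h3 t
    rw [LinearMap.mem_ker.mp ht, tmul_zero, sub_zero] at this
    exact this
  · rw [hS, Submodule.span_le]
    rintro _ ⟨p, rfl⟩
    simp
end

section
/- Let A be a commutative ring, B a finitely generated A-algebra, and M a B-module. If M is intrinsically of finite presentation over A, then M is finitely presented as a B-module. -/
/-- An `S`-module `N` is *intrinsically of finite presentation* over `R` if there exist an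
`n : ℕ` and an `R`-algebra homomorphism `f : R[x₁, …, xₙ] → S` from a polynomial ring over `R`
such that `N`, viewed as an `R[x₁, …, xₙ]`-module via restriction of scalars along `f`, is
finitely presented. -/
def Module.IntrinsicallyFinitePresentation (R S N : Type*) [CommRing R] [CommRing S]
    [Algebra R S] [AddCommGroup N] [Module S N] : Prop :=
  ∃ (n : ℕ) (f : MvPolynomial (Fin n) R →ₐ[R] S),
    letI : Module (MvPolynomial (Fin n) R) N := Module.compHom N f.toRingHom
    Module.FinitePresentation (MvPolynomial (Fin n) R) N

open TensorProduct in
theorem IFP_aux (P B M : Type*) [CommRing P] [CommRing B] [Algebra P B] [Algebra.FiniteType P B]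
    [AddCommGroup M] [Module B M] [Module P M] [IsScalarTower P B M]
    [Module.FinitePresentation P M] : Module.FinitePresentation B M := by
  classical
  obtain ⟨G, hG⟩ := (inferInstance : Algebra.FiniteType P B).out
  obtain ⟨T, hT⟩ := (inferInstance : Module.Finite P M).fg_top
  let l : B ⊗[P] M →ₗ[B] M := LinearMap.liftBaseChange B LinearMap.id
  have hl : ∀ b m, l (b ⊗ₜ m) = b • m := fun b m => by simp [l]
  let S : Finset (B ⊗[P] M) :=
    (G ×ˢ T).image fun p => p.1 ⊗ₜ[P] p.2 - 1 ⊗ₜ[P] (p.1 • p.2)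
  let K : Submodule B (B ⊗[P] M) := Submodule.span B S
  have key : ∀ b : B, ∀ m : M, b ⊗ₜ[P] m - 1 ⊗ₜ[P] (b • m) ∈ K := by
    intro b
    have hb : b ∈ Algebra.adjoin P (G : Set B) := by rw [hG]; trivial
    induction hb using Algebra.adjoin_induction with
    | mem g hg =>
      intro m
      have hm : m ∈ Submodule.span P (T : Set M) := by rw [hT]; trivial
      induction hm using Submodule.span_induction with
      | mem m hm =>
        apply Submodule.subset_span
        simp only [S, Finset.coe_image, Set.mem_image]
        exact ⟨(g, m), by simpa using ⟨hg, hm⟩, rfl⟩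
      | zero => simp
      | add x y _ _ hx hy =>
        have := K.add_mem hx hy
        rw [smul_add, tmul_add, tmul_add]
        convert this using 1
        abel
      | smul p x _ hx =>
        have := K.smul_mem (algebraMap P B p) hx
        rw [algebraMap_smul, smul_sub, ← tmul_smul, ← tmul_smul] at this
        rwa [smul_comm g p x]
    | algebraMap p =>
      intro m
      rw [algebraMap_smul, tmul_smul, smul_tmul', Algebra.algebraMap_eq_smul_one]
      simp
    | add x y _ _ hx hy =>
      intro m
      have := K.add_mem (hx m) (hy m)
      rw [add_smul, add_tmul, tmul_add]
      convert this using 1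
      abel
    | mul x y _ _ hx hy =>
      intro m
      have := K.add_mem (K.smul_mem x (hy m)) (hx (y • m))
      rw [smul_sub, smul_tmul', smul_tmul', smul_eq_mul, smul_eq_mul, mul_one] at this
      rw [mul_smul]
      convert this using 1
      abel
  refine Module.finitePresentation_of_surjective l (fun m => ⟨1 ⊗ₜ m, by simp [hl]⟩) ?_
  refine ⟨S, le_antisymm ?_ ?_⟩
  · rw [Submodule.span_le]
    intro x hx
    simp only [S, Finset.coe_image, Set.mem_image] at hx
    obtain ⟨p, _, rfl⟩ := hx
    simp [hl]
  · intro t ht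
    have h2 : ∀ t : B ⊗[P] M, t - 1 ⊗ₜ[P] (l t) ∈ K := by
      intro t
      induction t using TensorProduct.induction_on with
      | zero => simp
      | tmul b m => rw [hl]; exact key b m
      | add x y hx hy =>
        have := K.add_mem hx hy
        rw [map_add, tmul_add]
        convert this using 1
        abel
    have := h2 t
    rw [LinearMap.mem_ker.mp ht] at this
    simpa using this

/-- Let `A` be a commutative ring, `B` a finitely generated `A`-algebra, and
`M` a `B`-module. If `M` is intrinsically of finite presentation over `A`, then `M` is
finitely presented as a `B`-module. -/
theorem Module.IntrinsicallyFinitePresentation.finitePresentation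
    (A B M : Type*) [CommRing A] [CommRing B] [Algebra A B] [Algebra.FiniteType A B]
    [AddCommGroup M] [Module B M]
    (h : Module.IntrinsicallyFinitePresentation A B M) :
    Module.FinitePresentation B M := by
  obtain ⟨n, f, h⟩ := h
  letI : Module (MvPolynomial (Fin n) A) M := Module.compHom M f.toRingHom
  letI : Algebra (MvPolynomial (Fin n) A) B := f.toRingHom.toAlgebra
  haveI : IsScalarTower A (MvPolynomial (Fin n) A) B :=
    IsScalarTower.of_algebraMap_eq fun a => (f.commutes a).symm
  haveI : IsScalarTower (MvPolynomial (Fin n) A) B M :=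
    ⟨fun p b m => mul_smul (f p) b m⟩
  haveI : Algebra.FiniteType (MvPolynomial (Fin n) A) B :=
    Algebra.FiniteType.of_restrictScalars_finiteType A _ B
  haveI : Module.FinitePresentation (MvPolynomial (Fin n) A) M := h
  exact IFP_aux (MvPolynomial (Fin n) A) B M
end

section
/- Let A be a commutative ring, B an A-algebra, and C a B-algebra. Then C is intrinsically of finite presentation over A (as a B-module) if and only if C is finitely generated as a B-module and of finite presentation as an A-algebra. -/
/-- Auxiliary algebra structure whose module structure is `Module.compHom`. -/
abbrev Module.auxAlgebra {P B C : Type*} [CommRing P] [CommRing B] [CommRing C] [Algebra B C]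
    (f : P →+* B) : Algebra P C :=
  { Module.compHom C f with
    algebraMap := (algebraMap B C).comp f
    commutes' := fun _ _ => mul_comm _ _
    smul_def' := fun r x => Algebra.smul_def (f r) x }

theorem Module.aux_exists (A B C : Type*) [CommRing A] [CommRing B] [CommRing C]
    [Algebra A B] [Algebra B C] [Algebra A C] [IsScalarTower A B C]
    [Module.Finite B C] [Algebra.FiniteType A C] :
    ∃ B0 : Subalgebra A B, Algebra.FiniteType A B0 ∧ Module.Finite B0 C := by
  classical
  obtain ⟨s, hs⟩ := Algebra.FiniteType.out (R := A) (A := C)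
  let T : Finset B := s.biUnion fun c => (minpoly B c).coeffs
  refine ⟨Algebra.adjoin A (T : Set B), ?_, ?_⟩
  · exact (Subalgebra.fg_iff_finiteType _).1 ⟨T, rfl⟩
  · have hint : ∀ c ∈ s, IsIntegral (Algebra.adjoin A (T : Set B)) c := by
      intro c hc
      have hcB : IsIntegral B c := Algebra.IsIntegral.isIntegral c
      have hl : minpoly B c ∈ Polynomial.lifts (algebraMap (Algebra.adjoin A (T : Set B)) B) := by
        rw [Polynomial.lifts_iff_coeff_lifts]
        intro k
        by_cases h0 : (minpoly B c).coeff k = 0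
        · rw [h0]; exact ⟨0, map_zero _⟩
        · exact ⟨⟨_, Algebra.subset_adjoin (Finset.mem_coe.2 (Finset.mem_biUnion.2
            ⟨c, hc, Polynomial.coeff_mem_coeffs h0⟩))⟩, rfl⟩
      obtain ⟨q, hq, -, hm⟩ := Polynomial.lifts_and_natDegree_eq_and_monic hl (minpoly.monic hcB)
      refine ⟨q, hm, ?_⟩
      rw [← Polynomial.aeval_def, ← Polynomial.aeval_map_algebraMap B, hq, minpoly.aeval]
    have htop : Algebra.adjoin (Algebra.adjoin A (T : Set B)) (s : Set C) = ⊤ := by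
      rw [eq_top_iff]
      intro x _
      have hx : x ∈ Algebra.adjoin A (s : Set C) := hs ▸ Algebra.mem_top
      have hle : Algebra.adjoin A (s : Set C) ≤
          (Algebra.adjoin (Algebra.adjoin A (T : Set B)) (s : Set C)).restrictScalars A :=
        Algebra.adjoin_le Algebra.subset_adjoin
      exact hle hx
    have := fg_adjoin_of_finite (R := Algebra.adjoin A (T : Set B)) s.finite_toSet hint
    rw [htop] at this
    exact ⟨this⟩

/-- Let `A` be a commutative ring, `B` an `A`-algebra, and `C` a `B`-algebra
(hence also an `A`-algebra). Then `C` is intrinsically of finite presentation over `A` as a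
`B`-module if and only if `C` is finitely generated as a `B`-module and of finite presentation
as an `A`-algebra. -/
theorem Module.intrinsicallyFinitePresentation_algebra_iff
    (A B C : Type*) [CommRing A] [CommRing B] [CommRing C]
    [Algebra A B] [Algebra B C] [Algebra A C] [IsScalarTower A B C] :
    Module.IntrinsicallyFinitePresentation A B C ↔
      Module.Finite B C ∧ Algebra.FinitePresentation A C := by
  constructor
  · rintro ⟨n, f, h⟩
    let _ : Algebra (MvPolynomial (Fin n) A) C := Module.auxAlgebra f.toRingHom
    have h' : Module.FinitePresentation (MvPolynomial (Fin n) A) C := h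
    algebraize [f.toRingHom]
    have : IsScalarTower (MvPolynomial (Fin n) A) B C := .of_algebraMap_eq' rfl
    have : IsScalarTower A (MvPolynomial (Fin n) A) C := .of_algebraMap_eq fun a => by
      change _ = algebraMap B C (f (algebraMap A _ a))
      rw [f.commutes, ← IsScalarTower.algebraMap_apply]
    exact ⟨.of_restrictScalars_finite (MvPolynomial (Fin n) A) B C,
      .trans A (MvPolynomial (Fin n) A) C⟩
  · rintro ⟨_, _⟩
    obtain ⟨B0, h1, h2⟩ := Module.aux_exists A B C
    obtain ⟨n, g, hg⟩ := Algebra.FiniteType.iff_quotient_mvPolynomial''.1 h1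
    let f := B0.val.comp g
    refine ⟨n, f, ?_⟩
    let _ : Algebra (MvPolynomial (Fin n) A) C := Module.auxAlgebra f.toRingHom
    change Module.FinitePresentation (MvPolynomial (Fin n) A) C
    algebraize [g.toRingHom]
    have : IsScalarTower (MvPolynomial (Fin n) A) B0 C := .of_algebraMap_eq' rfl
    have : IsScalarTower A (MvPolynomial (Fin n) A) C := .of_algebraMap_eq fun a => by
      change _ = algebraMap B C (f (algebraMap A _ a))
      rw [f.commutes, ← IsScalarTower.algebraMap_apply]
    have : Module.Finite (MvPolynomial (Fin n) A) B0 :=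
      .of_surjective (Algebra.linearMap (MvPolynomial (Fin n) A) B0) hg
    have : Module.Finite (MvPolynomial (Fin n) A) C := .trans B0 C
    have : Algebra.FinitePresentation (MvPolynomial (Fin n) A) C :=
      .of_restrict_scalars_finitePresentation A _ _
    exact .of_finite_of_finitePresentation _ _
end

section
/- Let A be a commutative ring, B an A-algebra, M a B-module, and A' an A-algebra. If M is intrinsically of finite presentation over A, then the base change M ⊗_A A', viewed as a module over B ⊗_A A', is intrinsically of finite presentation over A'. -/
open TensorProduct

section BaseChange

variable (A A' B M : Type*) [CommRing A] [CommRing A'] [CommRing B]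
  [Algebra A A'] [Algebra A B]
  [AddCommGroup M] [Module A M] [Module B M] [IsScalarTower A B M]

/-- `LinearMap.lTensor` as a ring homomorphism between endomorphism rings. -/
noncomputable def lTensorRingHom : Module.End A M →+* Module.End A (A' ⊗[A] M) where
  toFun f := f.lTensor A'
  map_one' := LinearMap.lTensor_id A' M
  map_mul' f g := LinearMap.lTensor_comp A' f g
  map_zero' := LinearMap.lTensor_zero A'
  map_add' f g := LinearMap.lTensor_add A' f g

/-- The `B`-module structure on the base change `A' ⊗[A] M`, where `B` acts through the
second tensor factor: `b • (a' ⊗ m) = a' ⊗ (b • m)`. -/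
noncomputable def Module.tensorProductRight : Module B (A' ⊗[A] M) :=
  Module.compHom _ ((lTensorRingHom A A' M).comp (Module.toModuleEnd A M))

lemma tensorProductRight_isScalarTower :
    letI : Module B (A' ⊗[A] M) := Module.tensorProductRight A A' B M
    IsScalarTower A B (A' ⊗[A] M) := by
  letI : Module B (A' ⊗[A] M) := Module.tensorProductRight A A' B M
  have key : ∀ (c : B) (a' : A') (x : M), c • (a' ⊗ₜ[A] x) = a' ⊗ₜ[A] (c • x) := by
    intro c a' x
    show (LinearMap.lTensor A' ((Module.toModuleEnd A M) c)) (a' ⊗ₜ[A] x) = a' ⊗ₜ[A] (c • x)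
    simp
  refine ⟨fun a c z => ?_⟩
  induction z with
  | zero => simp only [smul_zero]
  | tmul a' x => simp only [key, smul_assoc, tmul_smul]
  | add u v hu hv => simp only [smul_add, hu, hv]

lemma tensorProductRight_smulCommClass :
    letI : Module B (A' ⊗[A] M) := Module.tensorProductRight A A' B M
    SMulCommClass A' B (A' ⊗[A] M) := by
  letI : Module B (A' ⊗[A] M) := Module.tensorProductRight A A' B M
  have key : ∀ (c : B) (a' : A') (x : M), c • (a' ⊗ₜ[A] x) = a' ⊗ₜ[A] (c • x) := by
    intro c a' x
    show (LinearMap.lTensor A' ((Module.toModuleEnd A M) c)) (a' ⊗ₜ[A] x) = a' ⊗ₜ[A] (c • x)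
    simp
  refine ⟨fun a' c z => ?_⟩
  induction z with
  | zero => simp only [smul_zero]
  | tmul a'' x => simp only [key, smul_tmul']
  | add u v hu hv => simp only [smul_add, hu, hv]

/-- The natural `B ⊗[A] A'`-module structure (written as `A' ⊗[A] B`, following Mathlib's
conventions) on the base change `M ⊗[A] A'` (written as `A' ⊗[A] M`). -/
noncomputable def Module.tensorProductBaseChange : Module (A' ⊗[A] B) (A' ⊗[A] M) :=
  letI : Module B (A' ⊗[A] M) := Module.tensorProductRight A A' B M
  haveI : IsScalarTower A B (A' ⊗[A] M) := tensorProductRight_isScalarTower A A' B M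
  haveI : SMulCommClass A' B (A' ⊗[A] M) := tensorProductRight_smulCommClass A A' B M
  TensorProduct.Algebra.module

attribute [local instance] MvPolynomial.algebraMvPolynomial

lemma fp_of_pushout_aux {A A' P P' M N : Type*} [CommRing A] [CommRing A'] [CommRing P]
    [CommRing P'] [Algebra A A'] [Algebra A P] [Algebra A P'] [Algebra A' P'] [Algebra P P']
    [IsScalarTower A A' P'] [IsScalarTower A P P'] [Algebra.IsPushout A A' P P']
    [AddCommGroup M] [AddCommGroup N] [Module A M] [Module P M] [IsScalarTower A P M]
    [Module A N] [Module A' N] [IsScalarTower A A' N] [Module P' N] [IsScalarTower A' P' N]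
    (g : M →ₗ[A] N) (hg : IsBaseChange A' g)
    (hc : ∀ (p : P) (m : M), algebraMap P P' p • g m = g (p • m))
    (hM : Module.FinitePresentation P M) : Module.FinitePresentation P' N := by
  letI : Module P N := Module.compHom N (algebraMap P P')
  haveI : IsScalarTower P P' N := ⟨fun p q n => by
    rw [Algebra.smul_def, mul_smul]; rfl⟩
  let g' : M →ₗ[P] N := { toFun := g, map_add' := g.map_add, map_smul' := fun p m => (hc p m).symm }
  refine FinitePresentation.of_isBaseChange g' ?_
  let h : P' ⊗[P] M →ₗ[P'] N := (TensorProduct.isBaseChange P M P').lift g'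
  have h1 : ∀ m, h (1 ⊗ₜ m) = g m := fun m => (TensorProduct.isBaseChange P M P').lift_eq g' m
  let e := Algebra.IsPushout.cancelBaseChange A A' P P' M
  have h2 : ∀ x, h (e.symm x) = hg.equiv x := by
    intro x
    induction x with
    | zero => simp
    | add x y hx hy => simp only [map_add, hx, hy]
    | tmul a m =>
      rw [IsBaseChange.equiv_tmul, Algebra.IsPushout.cancelBaseChange_symm_tmul,
        ← h1, ← algebraMap_smul P' a, ← map_smul, TensorProduct.smul_tmul', smul_eq_mul, mul_one]
  have hb : Function.Bijective h := by
    have : (h : P' ⊗[P] M → N) = hg.equiv ∘ e := by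
      ext x
      rw [Function.comp_apply, ← h2, LinearEquiv.symm_apply_apply]
    rw [this]
    exact hg.equiv.bijective.comp e.bijective
  exact IsBaseChange.of_equiv (LinearEquiv.ofBijective h hb) h1

/-- Let `A` be a commutative ring, `B` an `A`-algebra, `M` a `B`-module, and
`A'` an `A`-algebra. If `M` is intrinsically of finite presentation over `A`, then the base
change `M ⊗[A] A'` (written here, following Mathlib's convention for base change, as
`A' ⊗[A] M`), viewed as a module over `B ⊗[A] A'` (written as `A' ⊗[A] B`), is intrinsically
of finite presentation over `A'`. -/
theorem Module.IntrinsicallyFinitePresentation.baseChange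
    (h : Module.IntrinsicallyFinitePresentation A B M) :
    letI : Module (A' ⊗[A] B) (A' ⊗[A] M) := Module.tensorProductBaseChange A A' B M
    Module.IntrinsicallyFinitePresentation A' (A' ⊗[A] B) (A' ⊗[A] M) := by
  obtain ⟨n, f, hM⟩ := h
  letI iN : Module (A' ⊗[A] B) (A' ⊗[A] M) := Module.tensorProductBaseChange A A' B M
  have key : ∀ (a a' : A') (b : B) (m : M),
      (a ⊗ₜ[A] b) • (a' ⊗ₜ[A] m) = (a * a') ⊗ₜ[A] (b • m) := by
    intro a a' b m
    show a • (LinearMap.lTensor A' ((Module.toModuleEnd A M) b)) (a' ⊗ₜ[A] m) = _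
    simp [TensorProduct.smul_tmul']
  letI : Module (MvPolynomial (Fin n) A) M := Module.compHom M f.toRingHom
  haveI : IsScalarTower A (MvPolynomial (Fin n) A) M := ⟨fun a p m => by
    show f (a • p) • m = a • f p • m
    rw [map_smul, smul_assoc]⟩
  let f' : MvPolynomial (Fin n) A' →ₐ[A'] A' ⊗[A] B :=
    MvPolynomial.aeval fun i => 1 ⊗ₜ f (MvPolynomial.X i)
  have hf' : ∀ p, f' (MvPolynomial.map (algebraMap A A') p) = 1 ⊗ₜ f p := by
    intro p
    induction p using MvPolynomial.induction_on with
    | C a =>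
      have : f (MvPolynomial.C a) = algebraMap A B a := f.commutes a
      rw [MvPolynomial.map_C, MvPolynomial.aeval_C, this]
      simp [Algebra.algebraMap_eq_smul_one, Algebra.TensorProduct.one_def]
    | add p q hp hq => simp only [map_add, hp, hq, TensorProduct.tmul_add]
    | mul_X p i hp => simp [hp, f']
  refine ⟨n, f', ?_⟩
  letI : Module (MvPolynomial (Fin n) A') (A' ⊗[A] M) := Module.compHom _ f'.toRingHom
  haveI : IsScalarTower A' (MvPolynomial (Fin n) A') (A' ⊗[A] M) := ⟨fun a p x => by
    show f' (a • p) • x = a • f' p • x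
    have ha : ∀ y : A' ⊗[A] M, a • y = (a ⊗ₜ[A] (1 : B)) • y := by
      intro y
      induction y with
      | zero => simp
      | add x y hx hy => simp only [smul_add, hx, hy]
      | tmul a' m => rw [key, one_smul, TensorProduct.smul_tmul', smul_eq_mul]
    rw [ha, smul_smul, map_smul, Algebra.smul_def]
    rfl⟩
  refine fp_of_pushout_aux (A := A) (A' := A') (P := MvPolynomial (Fin n) A)
    (TensorProduct.mk A A' M 1) (TensorProduct.isBaseChange A M A') ?_ hM
  intro p m
  show f' (MvPolynomial.map (algebraMap A A') p) • ((1 : A') ⊗ₜ[A] m) = 1 ⊗ₜ (f p • m)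
  rw [hf', key, one_mul]

end BaseChange
end

section
/- Let A be a commutative ring, B an A-algebra, M a B-module, and A' a faithfully flat A-algebra. If the base change M ⊗_A A', viewed as a module over B ⊗_A A', is intrinsically of finite presentation over A', then M is intrinsically of finite presentation over A. -/
open TensorProduct

section BaseChange

variable (A A' B M : Type*) [CommRing A] [CommRing A'] [CommRing B]
  [Algebra A A'] [Algebra A B]
  [AddCommGroup M] [Module A M] [Module B M] [IsScalarTower A B M]

open TensorProduct in
/-- Finite presentation ascends along finite type algebras acting on the same module. -/
lemma IFP_aux_of_restrictScalars (R S M : Type*) [CommRing R] [CommRing S] [Algebra R S]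
    [AddCommGroup M] [Module R M] [Module S M] [IsScalarTower R S M]
    [Algebra.FiniteType R S] [Module.FinitePresentation R M] :
    Module.FinitePresentation S M := by
  classical
  obtain ⟨z, hz⟩ := Algebra.FiniteType.out (R := R) (A := S)
  obtain ⟨g, hg⟩ := (inferInstance : Module.Finite R M).fg_top
  let l : S ⊗[R] M →ₗ[S] M := AlgebraTensorModule.lift
    ((LinearMap.lsmul S (Module.End R M)).flip (LinearMap.id (R := R) (M := M)))
  have hl : ∀ (s : S) (m : M), l (s ⊗ₜ m) = s • m := fun s m => by simp [l]
  refine Module.finitePresentation_of_surjective l (fun m => ⟨1 ⊗ₜ m, by simp [hl]⟩) ?_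
  let d : S → M → S ⊗[R] M := fun s m => s ⊗ₜ m - 1 ⊗ₜ (s • m)
  let G : Finset (S ⊗[R] M) := (z ×ˢ g).image fun p => d p.1 p.2
  let K : Submodule S (S ⊗[R] M) := Submodule.span S (G : Set (S ⊗[R] M))
  have hzm : ∀ s ∈ z, ∀ m : M, d s m ∈ K := by
    intro s hs m
    have hm : m ∈ Submodule.span R (g : Set M) := by rw [hg]; trivial
    induction hm using Submodule.span_induction with
    | mem x hx =>
      apply Submodule.subset_span
      simp only [G, Finset.coe_image]
      exact ⟨(s, x), by simpa using ⟨hs, hx⟩, rfl⟩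
    | zero => simp [d]
    | add x y _ _ hx hy =>
      have : d s (x + y) = d s x + d s y := by simp only [d, tmul_add, smul_add]; abel
      rw [this]; exact K.add_mem hx hy
    | smul r x _ hx =>
      have : d s (r • x) = algebraMap R S r • d s x := by
        simp only [d, algebraMap_smul, smul_sub, tmul_smul, smul_comm s r x]
      rw [this]; exact K.smul_mem _ hx
  have hall : ∀ s : S, ∀ m : M, d s m ∈ K := by
    intro s
    have hs : s ∈ Algebra.adjoin R (z : Set S) := by rw [hz]; trivial
    induction hs using Algebra.adjoin_induction with
    | mem x hx => exact hzm x hx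
    | algebraMap r =>
      intro m
      have : d (algebraMap R S r) m = 0 := by
        simp only [d, algebraMap_smul, tmul_smul, Algebra.algebraMap_eq_smul_one, smul_tmul',
          smul_assoc, one_smul, sub_self]
      rw [this]; exact K.zero_mem
    | add x y _ _ hx hy =>
      intro m
      have : d (x + y) m = d x m + d y m := by
        simp only [d, add_tmul, add_smul, tmul_add]; abel
      rw [this]; exact K.add_mem (hx m) (hy m)
    | mul x y _ _ hx hy =>
      intro m
      have : d (x * y) m = x • d y m + d x (y • m) := by
        simp only [d, smul_sub, smul_tmul', smul_eq_mul, mul_one, mul_smul]; abel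
      rw [this]; exact K.add_mem (K.smul_mem _ (hy m)) (hx _)
  have hK : LinearMap.ker l = K := by
    apply le_antisymm
    · intro x hx
      have : x - 1 ⊗ₜ l x ∈ K := by
        clear hx
        induction x with
        | zero => simp
        | tmul s m => rw [hl]; exact hall s m
        | add x y hx hy =>
          have : x + y - 1 ⊗ₜ l (x + y) = (x - 1 ⊗ₜ[R] l x) + (y - 1 ⊗ₜ[R] l y) := by
            rw [map_add, tmul_add]; abel
          rw [this]; exact K.add_mem hx hy
      rw [LinearMap.mem_ker] at hx
      simpa [hx] using this
    · refine Submodule.span_le.mpr ?_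
      intro x hx
      simp only [G, Finset.coe_image] at hx
      obtain ⟨p, _, rfl⟩ := hx
      simp [d, hl]
  rw [hK]
  exact ⟨G, rfl⟩

open TensorProduct in
/-- Faithfully flat descent of finite presentation of modules. -/
lemma IFP_aux_descent (R T M : Type*) [CommRing R] [CommRing T] [Algebra R T]
    [AddCommGroup M] [Module R M] [Module.FaithfullyFlat R T]
    [Module.FinitePresentation T (T ⊗[R] M)] :
    Module.FinitePresentation R M := by
  have : Module.Finite R M := .of_finite_tensorProduct_of_faithfullyFlat T
  obtain ⟨n, f, hf⟩ := Module.Finite.exists_fin' R M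
  refine Module.finitePresentation_of_surjective f hf ?_
  rw [← Module.Finite.iff_fg]
  have h1 : (LinearMap.ker (AlgebraTensorModule.lTensor T T f)).FG :=
    Module.FinitePresentation.fg_ker _ (LinearMap.lTensor_surjective T hf)
  rw [← Module.Finite.iff_fg] at h1
  have : Module.Finite T (T ⊗[R] (LinearMap.ker f)) :=
    Module.Finite.equiv (LinearMap.tensorKerEquiv T T f).symm
  exact .of_finite_tensorProduct_of_faithfullyFlat T

attribute [local instance] Algebra.TensorProduct.rightAlgebra in
open TensorProduct in
/-- Descent along `P → A' ⊗[A] P`. -/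
lemma IFP_aux_core (A A' P M : Type*) [CommRing A] [CommRing A'] [CommRing P]
    [Algebra A A'] [Algebra A P] [AddCommGroup M] [Module A M] [Module P M] [IsScalarTower A P M]
    [Module.FaithfullyFlat A A'] [Module (A' ⊗[A] P) (A' ⊗[A] M)]
    (h : ∀ (a a' : A') (p : P) (m : M),
      (a ⊗ₜ[A] p) • (a' ⊗ₜ[A] m) = (a * a') ⊗ₜ[A] (p • m))
    [Module.FinitePresentation (A' ⊗[A] P) (A' ⊗[A] M)] :
    Module.FinitePresentation P M := by
  have : Module.FaithfullyFlat P (A' ⊗[A] P) :=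
    .of_linearEquiv _ _ (Algebra.TensorProduct.commRight _ _ _).symm.toLinearEquiv
  have hP : ∀ (p : P) (x : A' ⊗[A] P), p • x = (1 ⊗ₜ p) * x := fun p x => by
    rw [Algebra.smul_def]; rfl
  let toF : (A' ⊗[A] M) →+ ((A' ⊗[A] P) ⊗[P] M) := TensorProduct.liftAddHom
    { toFun := fun a =>
        { toFun := fun m => (a ⊗ₜ[A] (1 : P)) ⊗ₜ[P] m
          map_zero' := by simp
          map_add' := by intros; simp [tmul_add] }
      map_zero' := by ext; simp
      map_add' := by intros; ext; simp [add_tmul] }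
    (by
      intro r a m
      change ((r • a) ⊗ₜ[A] (1 : P)) ⊗ₜ[P] m = (a ⊗ₜ[A] (1 : P)) ⊗ₜ[P] (r • m)
      rw [← algebraMap_smul P r m, ← smul_tmul, hP, Algebra.TensorProduct.tmul_mul_tmul,
        smul_tmul, one_mul, mul_one, Algebra.algebraMap_eq_smul_one])
  let invF : ((A' ⊗[A] P) ⊗[P] M) →+ (A' ⊗[A] M) := TensorProduct.liftAddHom
    { toFun := fun t =>
        { toFun := fun m => t • ((1 : A') ⊗ₜ[A] m)
          map_zero' := by simp
          map_add' := by intros; simp [tmul_add] }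
      map_zero' := by ext; simp
      map_add' := by intros; ext; simp [add_smul] }
    (by
      intro r t m
      change (r • t) • ((1 : A') ⊗ₜ[A] m) = t • ((1 : A') ⊗ₜ[A] (r • m))
      rw [hP, mul_comm, mul_smul, h, one_mul])
  have hto : ∀ a m, toF (a ⊗ₜ m) = (a ⊗ₜ[A] (1 : P)) ⊗ₜ[P] m := fun a m => rfl
  have hinv : ∀ t m, invF (t ⊗ₜ m) = t • ((1 : A') ⊗ₜ[A] m) := fun t m => rfl
  have hlin : ∀ (t : A' ⊗[A] P) x, toF (t • x) = t • toF x := by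
    intro t x
    induction t with
    | zero => simp
    | add t u ht hu => simp only [add_smul, map_add, ht, hu]
    | tmul a p =>
      induction x with
      | zero => simp
      | add x y hx hy => simp only [smul_add, map_add, hx, hy]
      | tmul a' m =>
        rw [h, hto, hto, smul_tmul', smul_eq_mul, Algebra.TensorProduct.tmul_mul_tmul, ← smul_tmul,
          hP, Algebra.TensorProduct.tmul_mul_tmul, one_mul, mul_comm p 1]
  let toL : (A' ⊗[A] M) →ₗ[A' ⊗[A] P] ((A' ⊗[A] P) ⊗[P] M) :=
    { toFun := toF, map_add' := toF.map_add, map_smul' := hlin }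
  have hb : Function.Bijective toL := by
    refine Function.bijective_iff_has_inverse.mpr ⟨invF, fun x => ?_, fun x => ?_⟩
    · change invF (toF x) = x
      induction x with
      | zero => simp
      | add x y hx hy => simp only [map_add, hx, hy]
      | tmul a m => rw [hto, hinv, h, mul_one, one_smul]
    · change toF (invF x) = x
      induction x with
      | zero => simp
      | add x y hx hy => simp only [map_add, hx, hy]
      | tmul t m =>
        rw [hinv, hlin, hto, smul_tmul', smul_eq_mul, ← Algebra.TensorProduct.one_def, mul_one]
  have : Module.FinitePresentation (A' ⊗[A] P) ((A' ⊗[A] P) ⊗[P] M) :=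
    .of_equiv (LinearEquiv.ofBijective toL hb)
  exact IFP_aux_descent P (A' ⊗[A] P) M

lemma IFP_aux_smul (a a' : A') (b : B) (m : M) :
    letI : Module (A' ⊗[A] B) (A' ⊗[A] M) := Module.tensorProductBaseChange A A' B M
    (a ⊗ₜ[A] b) • (a' ⊗ₜ[A] m) = (a * a') ⊗ₜ[A] (b • m) := by
  letI : Module B (A' ⊗[A] M) := Module.tensorProductRight A A' B M
  haveI : IsScalarTower A B (A' ⊗[A] M) := tensorProductRight_isScalarTower A A' B M
  haveI : SMulCommClass A' B (A' ⊗[A] M) := tensorProductRight_smulCommClass A A' B M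
  have key : ∀ (c : B) (a' : A') (x : M), c • (a' ⊗ₜ[A] x) = a' ⊗ₜ[A] (c • x) := by
    intro c a' x
    show (LinearMap.lTensor A' ((Module.toModuleEnd A M) c)) (a' ⊗ₜ[A] x) = a' ⊗ₜ[A] (c • x)
    simp
  refine (TensorProduct.Algebra.smul_def a b (a' ⊗ₜ[A] m)).trans ?_
  rw [key, smul_tmul', smul_eq_mul]

/-- Let `A` be a commutative ring, `B` an `A`-algebra, `M` a `B`-module, and
`A'` a faithfully flat `A`-algebra. If the base change `M ⊗[A] A'` (written here, following
Mathlib's convention for base change, as `A' ⊗[A] M`), viewed as a module over `B ⊗[A] A'`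
(written as `A' ⊗[A] B`), is intrinsically of finite presentation over `A'`, then `M` is
intrinsically of finite presentation over `A`. -/
theorem Module.IntrinsicallyFinitePresentation.of_baseChange_faithfullyFlat
    [Module.FaithfullyFlat A A']
    (h : letI : Module (A' ⊗[A] B) (A' ⊗[A] M) := Module.tensorProductBaseChange A A' B M
         Module.IntrinsicallyFinitePresentation A' (A' ⊗[A] B) (A' ⊗[A] M)) :
    Module.IntrinsicallyFinitePresentation A B M := by
  letI iB : Module (A' ⊗[A] B) (A' ⊗[A] M) := Module.tensorProductBaseChange A A' B M
  obtain ⟨n, f, hf⟩ := h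
  choose k t b hb using fun i : Fin n ↦ TensorProduct.exists_sum_tmul_eq (f (MvPolynomial.X i))
  let e := Fintype.equivFin (Σ i, Fin (k i))
  let N := Fintype.card (Σ i, Fin (k i))
  let P := MvPolynomial (Fin N) A
  let g : P →ₐ[A] B := MvPolynomial.aeval fun q => b (e.symm q).1 (e.symm q).2
  let gT : A' ⊗[A] P →ₐ[A'] A' ⊗[A] B := Algebra.TensorProduct.map (.id A' A') g
  let ψ : MvPolynomial (Fin n) A' →ₐ[A'] A' ⊗[A] P :=
    MvPolynomial.aeval fun i => ∑ j, t i j ⊗ₜ[A] (MvPolynomial.X (e ⟨i, j⟩) : P)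
  have hψ : f = gT.comp ψ := by
    ext i
    have hq : ∀ q, b (e.symm (e q)).1 (e.symm (e q)).2 = b q.1 q.2 := fun q => by
      rw [e.symm_apply_apply]
    have hg : ∀ j, g (MvPolynomial.X (e ⟨i, j⟩)) = b i j := fun j =>
      (MvPolynomial.aeval_X _ _).trans (hq ⟨i, j⟩)
    simp [ψ, gT, hb, hg]
  refine ⟨N, g, ?_⟩
  letI iP : Module P M := Module.compHom M g.toRingHom
  have hP : ∀ (p : P) (m : M), p • m = g p • m := fun _ _ => rfl
  haveI : IsScalarTower A P M := ⟨fun a p m => by rw [hP, hP, map_smul, smul_assoc]⟩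
  letI iT : Module (A' ⊗[A] P) (A' ⊗[A] M) := Module.compHom _ gT.toRingHom
  have hT : ∀ (p : A' ⊗[A] P) (m : A' ⊗[A] M), p • m = gT p • m := fun _ _ => rfl
  letI iX : Module (MvPolynomial (Fin n) A') (A' ⊗[A] M) := Module.compHom _ f.toRingHom
  have hX : ∀ (p : MvPolynomial (Fin n) A') (m : A' ⊗[A] M), p • m = f p • m := fun _ _ => rfl
  letI : Algebra (MvPolynomial (Fin n) A') (A' ⊗[A] P) := ψ.toRingHom.toAlgebra
  haveI : IsScalarTower A' (MvPolynomial (Fin n) A') (A' ⊗[A] P) :=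
    IsScalarTower.of_algebraMap_eq fun a => (ψ.commutes a).symm
  haveI : Algebra.FiniteType (MvPolynomial (Fin n) A') (A' ⊗[A] P) :=
    Algebra.FiniteType.of_restrictScalars_finiteType A' _ _
  haveI : IsScalarTower (MvPolynomial (Fin n) A') (A' ⊗[A] P) (A' ⊗[A] M) :=
    ⟨fun p q m => by
      rw [hT, hT, hX, Algebra.smul_def, map_mul, mul_smul, hψ]; rfl⟩
  haveI : Module.FinitePresentation (MvPolynomial (Fin n) A') (A' ⊗[A] M) := hf
  haveI : Module.FinitePresentation (A' ⊗[A] P) (A' ⊗[A] M) :=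
    IFP_aux_of_restrictScalars (MvPolynomial (Fin n) A') _ _
  exact IFP_aux_core A A' P M fun a a' p m => by
    rw [hT, hP]
    exact IFP_aux_smul A A' B M a a' (g p) m

end BaseChange
end

section
/- Let A be a commutative ring, B an A-algebra, M a B-module, and B' a B-algebra of finite presentation. If M is intrinsically of finite presentation over A, then M ⊗_B B', viewed as a B'-module, is intrinsically of finite presentation over A. -/
open TensorProduct

lemma IFPAux.fg_smul_top {Q C N : Type*} [CommRing Q] [CommRing C] [Algebra Q C]
    [AddCommGroup N] [Module C N] [Module Q N] [IsScalarTower Q C N] [Module.Finite Q N]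
    (I : Ideal C) (hI : I.FG) : ((I • ⊤ : Submodule C N).restrictScalars Q).FG := by
  refine Submodule.fg_induction (R := C) (M := C)
    (motive := fun I _ => ((I • ⊤ : Submodule C N).restrictScalars Q).FG) ?_ ?_ I hI
  · intro x
    have : ((Submodule.span C {x} : Ideal C) • ⊤ : Submodule C N).restrictScalars Q =
        LinearMap.range ((LinearMap.lsmul C N x).restrictScalars Q) := by
      ext n
      have := Submodule.ideal_span_singleton_smul x (⊤ : Submodule C N)
      simp only [Ideal.span] at this
      rw [this]
      simp [Submodule.mem_smul_pointwise_iff_exists]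
    rw [this]
    exact Submodule.fg_range _
  · intro I J _ _ hI hJ
    have : ((I ⊔ J) • ⊤ : Submodule C N).restrictScalars Q =
        (I • ⊤ : Submodule C N).restrictScalars Q ⊔ (J • ⊤ : Submodule C N).restrictScalars Q := by
      rw [Submodule.sup_smul]
      simp
    rw [this]
    exact hI.sup hJ

lemma IFPAux.quot {Q C N D : Type*} [CommRing Q] [CommRing C] [Algebra Q C]
    [AddCommGroup N] [Module C N] [Module Q N] [IsScalarTower Q C N]
    [CommRing D] [Algebra C D] [Algebra Q D] [IsScalarTower Q C D]
    (hs : Function.Surjective (algebraMap C D)) (hk : (RingHom.ker (algebraMap C D)).FG)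
    [Module.FinitePresentation Q N] : Module.FinitePresentation Q (D ⊗[C] N) := by
  refine Module.finitePresentation_of_surjective
    ((TensorProduct.mk C D N 1).restrictScalars Q) ?_ ?_
  · exact TensorProduct.mk_surjective _ _ _ hs
  · have : LinearMap.ker ((TensorProduct.mk C D N 1).restrictScalars Q) =
        ((RingHom.ker (algebraMap C D)) • ⊤ : Submodule C N).restrictScalars Q := by
      have ex := rTensor_exact N (LinearMap.exact_subtype_ker_map (Algebra.linearMap C D)) hs
      rw [← (TensorProduct.lid C N).conj_exact_iff_exact, LinearMap.exact_iff] at ex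
      have h1 : ((Algebra.linearMap C D).rTensor N) ∘ₗ (TensorProduct.lid C N).symm.toLinearMap =
          TensorProduct.mk C D N 1 := by ext; simp
      rw [LinearMap.ker_restrictScalars, ← h1]
      congr 1
      refine ex.trans ?_
      rw [LinearMap.range_comp]
      exact Submodule.map_range_rTensor_subtype_lid
    rw [this]
    exact IFPAux.fg_smul_top _ hk

lemma IFPAux.ofEquiv {A Q S N : Type*} [CommRing A] [CommRing Q] [CommRing S] [Algebra A Q]
    [Algebra Q S] [Algebra A S] [IsScalarTower A Q S] [AddCommGroup N] [Module S N] [Module Q N]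
    [IsScalarTower Q S N] [Module.FinitePresentation Q N]
    (n : ℕ) (e : MvPolynomial (Fin n) A ≃ₐ[A] Q) :
    Module.IntrinsicallyFinitePresentation A S N := by
  refine ⟨n, (IsScalarTower.toAlgHom A Q S).comp e.toAlgHom, ?_⟩
  letI : Algebra (MvPolynomial (Fin n) A) Q := e.toRingEquiv.toRingHom.toAlgebra
  letI : Module (MvPolynomial (Fin n) A) N :=
    Module.compHom N ((IsScalarTower.toAlgHom A Q S).comp e.toAlgHom).toRingHom
  haveI : IsScalarTower (MvPolynomial (Fin n) A) Q N := by
    refine .of_algebraMap_smul fun p x => ?_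
    exact (algebraMap_smul S (e p) x).symm
  haveI : Module.FinitePresentation (MvPolynomial (Fin n) A) Q := by
    refine Module.FinitePresentation.of_equiv (M := MvPolynomial (Fin n) A)
      (LinearEquiv.ofBijective (Algebra.linearMap _ Q) e.bijective)
  exact Module.FinitePresentation.trans _ N Q

attribute [local instance] MvPolynomial.algebraMvPolynomial

lemma IFPAux.poly (P B M : Type*) [CommRing P] [CommRing B] [Algebra P B]
    [AddCommGroup M] [Module B M] [Module P M] [IsScalarTower P B M]
    [Module.FinitePresentation P M] (k : ℕ) :
    Module.FinitePresentation (MvPolynomial (Fin k) P) (MvPolynomial (Fin k) B ⊗[B] M) :=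
  Module.FinitePresentation.of_equiv
    (Algebra.IsPushout.cancelBaseChange P (MvPolynomial (Fin k) P) B (MvPolynomial (Fin k) B) M).symm

/-- Let `A` be a commutative ring, `B` an `A`-algebra, `M` a `B`-module, and
`B'` a `B`-algebra of finite presentation (an `A`-algebra via composition). If `M` is
intrinsically of finite presentation over `A`, then `M ⊗[B] B'` (written here, following
Mathlib's convention for base change, as `B' ⊗[B] M`), viewed as a `B'`-module, is
intrinsically of finite presentation over `A`. -/
theorem Module.IntrinsicallyFinitePresentation.baseChange_finitePresentation
    (A B B' M : Type*) [CommRing A] [CommRing B] [CommRing B'] [Algebra A B]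
    [Algebra B B'] [Algebra A B'] [IsScalarTower A B B'] [Algebra.FinitePresentation B B']
    [AddCommGroup M] [Module B M]
    (h : Module.IntrinsicallyFinitePresentation A B M) :
    Module.IntrinsicallyFinitePresentation A B' (B' ⊗[B] M) := by
  obtain ⟨n, f, hf⟩ := h
  obtain ⟨k, g, hg, hker⟩ := Algebra.FinitePresentation.out (R := B) (A := B')
  letI : Module (MvPolynomial (Fin n) A) M := Module.compHom M f.toRingHom
  letI : Algebra (MvPolynomial (Fin n) A) B := f.toRingHom.toAlgebra
  haveI : IsScalarTower (MvPolynomial (Fin n) A) B M := .of_algebraMap_smul fun _ _ => rfl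
  haveI : Module.FinitePresentation (MvPolynomial (Fin n) A) M := hf
  have h1 := IFPAux.poly (MvPolynomial (Fin n) A) B M k
  letI : Algebra (MvPolynomial (Fin k) B) B' := g.toRingHom.toAlgebra
  haveI : IsScalarTower B (MvPolynomial (Fin k) B) B' :=
    .of_algebraMap_eq fun x => (g.commutes x).symm
  letI : Algebra (MvPolynomial (Fin k) (MvPolynomial (Fin n) A)) B' :=
    ((algebraMap (MvPolynomial (Fin k) B) B').comp (algebraMap _ _)).toAlgebra
  haveI : IsScalarTower (MvPolynomial (Fin k) (MvPolynomial (Fin n) A))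
    (MvPolynomial (Fin k) B) B' := .of_algebraMap_eq fun x => rfl
  haveI : IsScalarTower A (MvPolynomial (Fin k) (MvPolynomial (Fin n) A)) B' := by
    refine .of_algebraMap_eq fun x => ?_
    rw [IsScalarTower.algebraMap_apply (MvPolynomial (Fin k) (MvPolynomial (Fin n) A))
      (MvPolynomial (Fin k) B) B']
    have : algebraMap (MvPolynomial (Fin k) (MvPolynomial (Fin n) A)) (MvPolynomial (Fin k) B)
        (algebraMap A _ x) = algebraMap B _ (algebraMap A B x) := by
      rw [IsScalarTower.algebraMap_apply A (MvPolynomial (Fin n) A)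
        (MvPolynomial (Fin k) (MvPolynomial (Fin n) A))]
      simp only [MvPolynomial.algebraMap_eq, MvPolynomial.algebraMap_def, MvPolynomial.map_C]
      congr 1
      exact f.commutes x
    rw [this, ← IsScalarTower.algebraMap_apply, ← IsScalarTower.algebraMap_apply]
  have h2 : Module.FinitePresentation (MvPolynomial (Fin k) (MvPolynomial (Fin n) A))
      (B' ⊗[MvPolynomial (Fin k) B] (MvPolynomial (Fin k) B ⊗[B] M)) := IFPAux.quot hg hker
  have h3 : Module.FinitePresentation (MvPolynomial (Fin k) (MvPolynomial (Fin n) A))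
      (B' ⊗[B] M) :=
    Module.FinitePresentation.of_equiv
      ((TensorProduct.AlgebraTensorModule.cancelBaseChange B (MvPolynomial (Fin k) B) B' B'
        M).restrictScalars (MvPolynomial (Fin k) (MvPolynomial (Fin n) A)))
  exact IFPAux.ofEquiv (Q := MvPolynomial (Fin k) (MvPolynomial (Fin n) A)) (k + n)
    ((MvPolynomial.renameEquiv A finSumFinEquiv.symm).trans (MvPolynomial.sumAlgEquiv A _ _))
end
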